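/- Under assumptions (A1)–(A4), let τ ≥ 1/p* and r ∈ [0,1]. Then any y ∈ E with Φ_τ(y) − d(τ) ≤ (1 − r)·(1 − d(τ)) satisfies y ∈ 𝒮 and τ·f(y) − 1 ≥ r·ρ·(1 − d(τ)). -/

import Mathlib

/-! Write `g = τ f`, `d = d(τ)`, `s = r (1 - d)`. Concavity and upper semicontinuity force `f` to be
finite everywhere as soon as it is finite and positive at one point, so `dom f = {f > 0}` is convex
and contains the interior of its closure; in particular `f e0 > 0` and the radial transform is
finite.

The ball of radius `R0` about `e0` lies in `S0`. Writing `e0` as a convex combination of `x*` and a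
point of that ball on the opposite side gives `f e0 ≥ ρ f(x*)`, hence `g e0 ≥ ρ`
(`rho_mul_le_center`). Concavity along rays from `e0` gives `Φ_τ(x*) ≤ 1`, so `d ≤ 1`
(`PhiT_xstar_le_one`).

The hypothesis on `y` then reads `Φ_τ(y) ≤ 1 - s`. The bound on `φ_𝒮` gives feasibility. The bound
on the radial transform gives `v g(z_v) > 1` for `z_v = e0 + (y - e0)/v` and every `v > 1 - s`.
If `s > 0`, use `1 - s < v ≤ 1`: since `y = (1 - v) e0 + v z_v`, concavity gives
`g y ≥ 1 + (1 - v) ρ`, and `v → 1 - s` finishes. If `s = 0`, upper semicontinuity along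
`z_v → y` as `v → 1+` gives `g y ≥ 1`. -/
open Set Filter Topology Classical

noncomputable section

namespace MultiRadial

variable {E : Type*} [NormedAddCommGroup E] [InnerProductSpace ℝ E] [FiniteDimensional ℝ E]

/-- The hypograph of an extended-positive-real-valued function `f`:
`{(x,u) ∈ E × ℝ | 0 < u ≤ f x}`.  `f` is "concave" iff this set is convex. -/
def hypo (f : E → ENNReal) : Set (E × ℝ) :=
  {p : E × ℝ | 0 < p.2 ∧ ENNReal.ofReal p.2 ≤ f p.1}

/-- The effective domain `dom f = {x | 0 < f x < ∞}`. -/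
def edom (f : E → ENNReal) : Set E := {x | f x ≠ 0 ∧ f x ≠ ⊤}

/-- The radial transformation `f^{Γ,e}(y) = sup {v > 0 | v * f (e + (y-e)/v) ≤ 1}`
(with `sup ∅ = 0`). -/
def radTrans (f : E → ENNReal) (e y : E) : ENNReal :=
  ⨆ v ∈ {v : ℝ | 0 < v ∧ ENNReal.ofReal v * f (e + v⁻¹ • (y - e)) ≤ 1}, ENNReal.ofReal v

/-- The gauge of `S` with respect to `e`: `γ_{S,e}(x) = inf {v > 0 | e + (x-e)/v ∈ S}`. -/
def gaugeFrom (S : Set E) (e x : E) : ℝ :=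
  sInf {v : ℝ | 0 < v ∧ e + v⁻¹ • (x - e) ∈ S}

/-- The interior radius of `S` with respect to `e`: `R_e(S) = inf {‖x - e‖ | x ∉ S}`. -/
def innerRadius (S : Set E) (e : E) : ℝ :=
  sInf ((fun x => ‖x - e‖) '' Sᶜ)

/-- The nonstandard indicator `ι̂_S` taking value `∞` on `S` and `0` elsewhere. -/
def indic (S : Set E) (x : E) : ENNReal := if x ∈ S then ⊤ else 0

/-- The data of the multiradial setting: objective `f`, constraint sets `S j`,
a candidate convex identifier `phiS`, the objective reference point `e0`,
a primal optimal solution `xstar`, and a Slater point `xSL`. -/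
structure Setup (E : Type*) [NormedAddCommGroup E] [InnerProductSpace ℝ E] (m : ℕ) where
  f : E → ENNReal
  S : Fin m → Set E
  phiS : E → ℝ
  e0 : E
  xstar : E
  xSL : E

variable {m : ℕ}

/-- `S0 = cl (dom f)`. -/
def Setup.S0 (P : Setup E m) : Set E := closure (edom P.f)

/-- The feasible region `𝒮 = ⋂ j, S j`. -/
def Setup.feas (P : Setup E m) : Set E := ⋂ j, P.S j

/-- `D0 = D(S0)`, the diameter of `S0`. -/
def Setup.D0 (P : Setup E m) : ℝ := Metric.diam P.S0

/-- `R0 = R_{e0}(S0)`. -/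
def Setup.R0 (P : Setup E m) : ℝ := innerRadius P.S0 P.e0

/-- The primal function `Ψ(x) = min {f x, ι̂_𝒮 x}`. -/
def Setup.Psi (P : Setup E m) (x : E) : ENNReal := min (P.f x) (indic P.feas x)

/-- The primal optimal value `p* = sup Ψ`. -/
def Setup.pStar (P : Setup E m) : ENNReal := ⨆ x, P.Psi x

/-- The multiradial dual function `Φ(y) = max {f^{Γ,e0} y, φ_𝒮 y}`. -/
def Setup.Phi (P : Setup E m) (y : E) : ENNReal :=
  max (radTrans P.f P.e0 y) (ENNReal.ofReal (P.phiS y))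

/-- The dual optimal value `d* = inf Φ`. -/
def Setup.dStar (P : Setup E m) : ENNReal := ⨅ y, P.Phi y

/-- `η = (1 - γ_{S0,e0}(x*)) * (1 - φ_𝒮(x_SL))`. -/
def Setup.eta (P : Setup E m) : ℝ :=
  (1 - gaugeFrom P.S0 P.e0 P.xstar) * (1 - P.phiS P.xSL)

/-- `ρ = R0 / (D0 + R0)`. -/
def Setup.rho (P : Setup E m) : ℝ := P.R0 / (P.D0 + P.R0)

/-- The rescaled primal function `Ψ_τ(x) = min {τ * f x, ι̂_𝒮 x}`. -/
def Setup.PsiT (P : Setup E m) (τ : ℝ) (x : E) : ENNReal :=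
  min (ENNReal.ofReal τ * P.f x) (indic P.feas x)

/-- The rescaled multiradial dual function `Φ_τ(y) = max {(τ f)^{Γ,e0} y, φ_𝒮 y}`. -/
def Setup.PhiT (P : Setup E m) (τ : ℝ) (y : E) : ENNReal :=
  max (radTrans (fun x => ENNReal.ofReal τ * P.f x) P.e0 y) (ENNReal.ofReal (P.phiS y))

/-- `p(τ) = sup Ψ_τ`. -/
def Setup.pVal (P : Setup E m) (τ : ℝ) : ENNReal := ⨆ x, P.PsiT τ x

/-- `d(τ) = inf Φ_τ`. -/
def Setup.dVal (P : Setup E m) (τ : ℝ) : ENNReal := ⨅ y, P.PhiT τ y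

/-- `c_τ = (η / p(τ)) * R0 / (D0 + R0)`. -/
def Setup.cVal (P : Setup E m) (τ : ℝ) : ℝ :=
  P.eta / (P.pVal τ).toReal * (P.R0 / (P.D0 + P.R0))

/-- Standing assumptions (A1)-(A4). -/
structure Assumptions (P : Setup E m) : Prop where
  /-- (A1) `f` is concave (its hypograph is convex). -/
  concave : Convex ℝ (hypo P.f)
  /-- (A1) `f` is upper semicontinuous. -/
  usc : UpperSemicontinuous P.f
  /-- (A1) `D0 = D(S0) < ∞`. -/
  diamFin : EMetric.diam P.S0 ≠ ⊤
  /-- (A2) each `S j` is closed. -/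
  closedS : ∀ j, IsClosed (P.S j)
  /-- (A2) each `S j` is convex. -/
  convexS : ∀ j, Convex ℝ (P.S j)
  /-- (A3) the identifier is lower semicontinuous. -/
  lscId : LowerSemicontinuous P.phiS
  /-- (A3) the identifier is convex. -/
  convexId : ConvexOn ℝ Set.univ P.phiS
  /-- (A3) `int 𝒮 = {x | φ_𝒮 x < 1}`. -/
  identifies : interior P.feas = {x | P.phiS x < 1}
  /-- (A3) `e0 ∈ int S0`. -/
  e0int : P.e0 ∈ interior P.S0
  /-- (A3) `R0 > 0`. -/
  R0pos : 0 < P.R0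
  /-- (A4) `x* ∈ 𝒮`. -/
  xstarFeas : P.xstar ∈ P.feas
  /-- (A4) `f x* = p*`. -/
  xstarOpt : P.f P.xstar = P.pStar
  /-- (A4) `p* > 0`. -/
  pStarPos : 0 < P.pStar
  /-- (A4) `p* < ∞`. -/
  pStarFin : P.pStar ≠ ⊤
  /-- (A4) `x_SL ∈ int 𝒮 ∩ dom f`. -/
  slater : P.xSL ∈ interior P.feas ∩ edom P.f
  /-- (A4) `η > 0`. -/
  etaPos : 0 < P.eta

/-! ### Finiteness and the effective domain -/

/-- Concavity of `f` on its effective domain, in real-valued form. -/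
lemma Assumptions.combo_le {P : Setup E m} (hP : Assumptions P) {x w : E}
    (hx : x ∈ edom P.f) (hw : w ∈ edom P.f) {a b : ℝ} (ha : 0 ≤ a) (hb : 0 ≤ b)
    (hab : a + b = 1) :
    0 < a * (P.f x).toReal + b * (P.f w).toReal ∧
    ENNReal.ofReal (a * (P.f x).toReal + b * (P.f w).toReal) ≤ P.f (a • x + b • w) := by
  have h1 : (x, (P.f x).toReal) ∈ hypo P.f :=
    ⟨ENNReal.toReal_pos hx.1 hx.2, (ENNReal.ofReal_toReal hx.2).le⟩
  have h2 : (w, (P.f w).toReal) ∈ hypo P.f :=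
    ⟨ENNReal.toReal_pos hw.1 hw.2, (ENNReal.ofReal_toReal hw.2).le⟩
  have h := hP.concave h1 h2 ha hb hab
  exact ⟨by simpa using h.1, by simpa using h.2⟩

/-- An infinite value at `x` would make `f` infinite on the half-open segment from `x` to `xSL`,
contradicting upper semicontinuity at `xSL`. -/
lemma Assumptions.ne_top {P : Setup E m} (hP : Assumptions P) (x : E) : P.f x ≠ ⊤ := by
  intro hx
  have hSL := hP.slater.2
  have hu : 0 < (P.f P.xSL).toReal := ENNReal.toReal_pos hSL.1 hSL.2
  have key : ∀ t : ℝ, 0 < t → t ≤ 1 → P.f ((1 - t) • P.xSL + t • x) = ⊤ := by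
    intro t ht ht1
    refine ENNReal.eq_top_of_forall_nnreal_le fun n => ?_
    have h1 : (P.xSL, (P.f P.xSL).toReal) ∈ hypo P.f :=
      ⟨hu, (ENNReal.ofReal_toReal hSL.2).le⟩
    have h2 : (x, ((n : ℝ) + 1) / t) ∈ hypo P.f := by
      refine ⟨by positivity, ?_⟩
      simp [hx]
    have h := (hP.concave h1 h2 (sub_nonneg.2 ht1) ht.le (by ring)).2
    refine le_trans ?_ h
    have e : (n : ENNReal) = ENNReal.ofReal n := by simp
    rw [e]
    apply ENNReal.ofReal_le_ofReal
    have : t * (((n : ℝ) + 1) / t) = n + 1 := by field_simp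
    simp only [Prod.smul_mk, Prod.mk_add_mk, smul_eq_mul, this]
    have := mul_nonneg (sub_nonneg.2 ht1) hu.le
    linarith
  have hev := hP.usc P.xSL ⊤ (lt_top_iff_ne_top.2 hSL.2)
  have hlim : Tendsto (fun t : ℝ => (1 - t) • P.xSL + t • x) (𝓝[>] 0) (𝓝 P.xSL) := by
    have : ContinuousAt (fun t : ℝ => (1 - t) • P.xSL + t • x) 0 := by fun_prop
    have h := this.tendsto
    simp only [sub_zero, one_smul, zero_smul, add_zero] at h
    exact h.mono_left nhdsWithin_le_nhds
  have h1 : ∀ᶠ t : ℝ in 𝓝[>] 0, t ∈ Ioc (0 : ℝ) 1 := Ioc_mem_nhdsGT one_pos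
  obtain ⟨t, ht, ht'⟩ := ((hlim.eventually hev).and h1).exists
  exact ht.ne (key t ht'.1 ht'.2)

lemma Assumptions.convex_edom {P : Setup E m} (hP : Assumptions P) : Convex ℝ (edom P.f) := by
  intro x hx w hw a b ha hb hab
  obtain ⟨h0, h⟩ := hP.combo_le hx hw ha hb hab
  exact ⟨(lt_of_lt_of_le (ENNReal.ofReal_pos.2 h0) h).ne', hP.ne_top _⟩

lemma Assumptions.interior_S0 {P : Setup E m} (hP : Assumptions P) :
    interior P.S0 = interior (edom P.f) := by
  apply hP.convex_edom.interior_closure_eq_interior_of_nonempty_interior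
  rw [hP.convex_edom.interior_nonempty_iff_affineSpan_eq_top]
  -- An affine subspace is closed, so `edom f` and its closure span the same one.
  have hcl : P.S0 ⊆ affineSpan ℝ (edom P.f) :=
    closure_minimal (subset_affineSpan ℝ _) (AffineSubspace.closed_of_finiteDimensional _)
  have h1 : affineSpan ℝ (interior P.S0) = ⊤ :=
    isOpen_interior.affineSpan_eq_top ⟨_, hP.e0int⟩
  rw [eq_top_iff, ← h1]
  exact affineSpan_le.2 (interior_subset.trans hcl)

lemma Assumptions.e0_mem_interior {P : Setup E m} (hP : Assumptions P) :
    P.e0 ∈ interior (edom P.f) := hP.interior_S0 ▸ hP.e0int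

lemma Assumptions.ball_subset {P : Setup E m} (hP : Assumptions P) :
    Metric.ball P.e0 P.R0 ⊆ edom P.f := by
  have h : Metric.ball P.e0 P.R0 ⊆ P.S0 := by
    intro x hx
    by_contra hxS
    have h1 : P.R0 ≤ ‖x - P.e0‖ :=
      csInf_le ⟨0, by rintro _ ⟨z, -, rfl⟩; exact norm_nonneg _⟩ ⟨x, hxS, rfl⟩
    rw [Metric.mem_ball, dist_eq_norm] at hx
    linarith
  have h2 := interior_maximal h Metric.isOpen_ball
  rw [hP.interior_S0] at h2
  exact h2.trans interior_subset

lemma Assumptions.xstar_mem {P : Setup E m} (hP : Assumptions P) : P.xstar ∈ edom P.f :=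
  ⟨hP.xstarOpt ▸ hP.pStarPos.ne', hP.ne_top _⟩

/-! ### Lower bound for the objective at the reference point -/

/-- `e0` lies between `x*` and any point at distance less than `R0` on the opposite side, whence
`ρ f(x*) ≤ f(e0)` in the limit. -/
lemma Assumptions.rho_mul_le_center {P : Setup E m} (hP : Assumptions P) :
    P.rho * (P.f P.xstar).toReal ≤ (P.f P.e0).toReal := by
  have hx := hP.xstar_mem
  have he := interior_subset hP.e0_mem_interior
  set F := (P.f P.xstar).toReal with hF
  have hFpos : 0 < F := ENNReal.toReal_pos hx.1 hx.2
  have hD : ‖P.xstar - P.e0‖ ≤ P.D0 := by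
    rw [← dist_eq_norm]
    exact Metric.dist_le_diam_of_mem (Metric.isBounded_iff_ediam_ne_top.2 hP.diamFin)
      (subset_closure hx) (subset_closure he)
  have hR0 := hP.R0pos
  have hD0 : 0 ≤ P.D0 := (norm_nonneg _).trans hD
  have key : ∀ R : ℝ, 0 < R → R < P.R0 → R / (P.D0 + R) * F ≤ (P.f P.e0).toReal := by
    intro R hR hR'
    set D := P.D0
    rcases hD0.eq_or_lt with h0 | hDpos
    · have hxe : P.xstar = P.e0 := by
        rw [← sub_eq_zero, ← norm_le_zero_iff]; linarith
      rw [← hxe, ← h0, zero_add, div_self hR.ne', one_mul]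
    -- The displacement `-(R / D) (x* - e0)` has norm at most `R`; this avoids normalising.
    set w := P.e0 - (R / D) • (P.xstar - P.e0) with hw
    have hwd : w ∈ edom P.f := by
      apply hP.ball_subset
      rw [Metric.mem_ball, dist_eq_norm, hw, sub_sub_cancel_left, norm_neg, norm_smul,
        Real.norm_of_nonneg (by positivity)]
      calc R / D * ‖P.xstar - P.e0‖ ≤ R / D * D := by gcongr
        _ = R := by field_simp
        _ < _ := hR'
    obtain ⟨-, h⟩ := hP.combo_le hx hwd (a := R / (D + R)) (b := D / (D + R))
      (by positivity) (by positivity) (by field_simp; ring)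
    have hc : (R / (D + R)) • P.xstar + (D / (D + R)) • w = P.e0 := by
      rw [hw]
      match_scalars <;> field_simp <;> ring
    rw [hc, ENNReal.ofReal_le_iff_le_toReal he.2] at h
    have : 0 ≤ D / (D + R) * (P.f w).toReal := by positivity
    linarith
  have hlim : Tendsto (fun R : ℝ => R / (P.D0 + R) * F) (𝓝[<] P.R0) (𝓝 (P.rho * F)) := by
    have : ContinuousAt (fun R : ℝ => R / (P.D0 + R) * F) P.R0 := by
      have : P.D0 + P.R0 ≠ 0 := by positivity
      fun_prop (disch := assumption)
    exact this.tendsto.mono_left nhdsWithin_le_nhds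
  refine le_of_tendsto hlim ?_
  filter_upwards [Ioo_mem_nhdsLT hR0] with R hR using key R hR.1 hR.2

/-! ### The radial transform along rays from the reference point -/

/-- Points above the value of the radial transform violate the defining inequality. -/
lemma one_lt_of_radTrans_lt {g : E → ENNReal} {e y : E} {v : ℝ} (hv : 0 < v)
    (h : radTrans g e y < ENNReal.ofReal v) :
    1 < ENNReal.ofReal v * g (e + v⁻¹ • (y - e)) := by
  by_contra hc
  rw [not_lt] at hc
  exact absurd (le_iSup₂ (f := fun (v : ℝ)
    (_ : v ∈ {v : ℝ | 0 < v ∧ ENNReal.ofReal v * g (e + v⁻¹ • (y - e)) ≤ 1}) =>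
      ENNReal.ofReal v) v ⟨hv, hc⟩) (not_le.2 h)

/-- If `y = e0 + v (z - e0)` with `z ∈ dom f` and `0 < v ≤ u`, then the perspective
`u f(e0 + (y - e0)/u)` is at least `(u - v) f(e0) + v f(z)`. -/
lemma Assumptions.persp {P : Setup E m} (hP : Assumptions P) {y : E} {v u : ℝ} (hv : 0 < v)
    (hvu : v ≤ u) (hz : P.e0 + v⁻¹ • (y - P.e0) ∈ edom P.f) :
    (u - v) * (P.f P.e0).toReal + v * (P.f (P.e0 + v⁻¹ • (y - P.e0))).toReal
      ≤ u * (P.f (P.e0 + u⁻¹ • (y - P.e0))).toReal := by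
  have hu : 0 < u := hv.trans_le hvu
  obtain ⟨-, h⟩ := hP.combo_le (interior_subset hP.e0_mem_interior) hz (a := (u - v) / u)
    (b := v / u) (div_nonneg (sub_nonneg.2 hvu) hu.le) (by positivity) (by field_simp; ring)
  have hc : ((u - v) / u) • P.e0 + (v / u) • (P.e0 + v⁻¹ • (y - P.e0))
      = P.e0 + u⁻¹ • (y - P.e0) := by
    match_scalars <;> field_simp <;> ring
  rw [hc, ENNReal.ofReal_le_iff_le_toReal (hP.ne_top _)] at h
  calc _ = u * ((u - v) / u * (P.f P.e0).toReal
        + v / u * (P.f (P.e0 + v⁻¹ • (y - P.e0))).toReal) := by field_simp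
    _ ≤ _ := by gcongr

/-- The inequality defining the radial transform of `τ f`, in real-valued form. -/
lemma Assumptions.persp_le_one_iff {P : Setup E m} (hP : Assumptions P) {τ v : ℝ} (hτ : 0 < τ)
    (hv : 0 < v) (z : E) :
    ENNReal.ofReal v * (ENNReal.ofReal τ * P.f z) ≤ 1 ↔ v * (τ * (P.f z).toReal) ≤ 1 := by
  conv_lhs => rw [← ENNReal.ofReal_toReal (hP.ne_top z), ← ENNReal.ofReal_mul hτ.le,
    ← ENNReal.ofReal_mul hv.le, ENNReal.ofReal_le_one]

lemma Assumptions.radTrans_ne_top {P : Setup E m} (hP : Assumptions P) {τ : ℝ} (hτ : 0 < τ)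
    (y : E) : radTrans (fun x => ENNReal.ofReal τ * P.f x) P.e0 y ≠ ⊤ := by
  have he := interior_subset hP.e0_mem_interior
  have hE : 0 < (P.f P.e0).toReal := ENNReal.toReal_pos he.1 he.2
  have hlim : Tendsto (fun v : ℝ => P.e0 + v⁻¹ • (y - P.e0)) atTop (𝓝 P.e0) := by
    simpa using ((tendsto_inv_atTop_zero (𝕜 := ℝ)).smul_const (y - P.e0)).const_add P.e0
  obtain ⟨v, hvz, hv⟩ := ((hlim.eventually
    (mem_interior_iff_mem_nhds.1 hP.e0_mem_interior)).and (eventually_gt_atTop 0)).exists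
  -- Past `v`, the perspective grows at least at rate `τ f(e0)`, so it exceeds `1` eventually.
  set B := v + 1 / (τ * (P.f P.e0).toReal)
  refine ne_top_of_le_ne_top (ENNReal.ofReal_ne_top (r := B)) (iSup₂_le fun u hu => ?_)
  apply ENNReal.ofReal_le_ofReal
  have h1 : u * (τ * _) ≤ 1 := (hP.persp_le_one_iff hτ hu.1 _).1 hu.2
  by_contra hc
  rw [not_le] at hc
  have hq : 0 < 1 / (τ * (P.f P.e0).toReal) := by positivity
  have h2 := hP.persp hv (u := u) (by simp only [B] at hc; linarith) hvz
  have h3 : 1 < (u - v) * (τ * (P.f P.e0).toReal) := by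
    rw [← div_lt_iff₀ (by positivity)]; simp only [B] at hc; linarith
  have h4 : 0 ≤ v * (P.f (P.e0 + v⁻¹ • (y - P.e0))).toReal := by positivity
  nlinarith

/-! ### Feasibility and the identifier -/

lemma Assumptions.isClosed_feas {P : Setup E m} (hP : Assumptions P) : IsClosed P.feas :=
  isClosed_iInter hP.closedS

/-- Segments from the Slater point to `y` stay in `int 𝒮` short of `y`. -/
lemma Assumptions.mem_feas {P : Setup E m} (hP : Assumptions P) {y : E} (hy : P.phiS y ≤ 1) :
    y ∈ P.feas := by
  have hSL : P.phiS P.xSL < 1 := by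
    have := hP.slater.1
    rwa [hP.identifies] at this
  have hlim : Tendsto (fun t : ℝ => t • P.xSL + (1 - t) • y) (𝓝[>] 0) (𝓝 y) := by
    have : ContinuousAt (fun t : ℝ => t • P.xSL + (1 - t) • y) 0 := by fun_prop
    have h := this.tendsto
    simp only [sub_zero, one_smul, zero_smul, zero_add] at h
    exact h.mono_left nhdsWithin_le_nhds
  refine hP.isClosed_feas.mem_of_tendsto hlim ?_
  filter_upwards [Ioo_mem_nhdsGT (one_pos (α := ℝ))] with t ht
  apply interior_subset
  rw [hP.identifies]
  have h := hP.convexId.2 (mem_univ P.xSL) (mem_univ y) ht.1.le (sub_nonneg.2 ht.2.le) (by ring)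
  simp only [smul_eq_mul] at h
  have := ht.1
  have := ht.2
  change P.phiS _ < 1
  nlinarith

lemma Assumptions.phiS_xstar_le_one {P : Setup E m} (hP : Assumptions P) :
    P.phiS P.xstar ≤ 1 := by
  have hcl : P.xstar ∈ closure (interior P.feas) := by
    have hc : Convex ℝ P.feas := convex_iInter hP.convexS
    rw [hc.closure_interior_eq_closure_of_nonempty_interior ⟨_, hP.slater.1⟩]
    exact subset_closure hP.xstarFeas
  have hsub : interior P.feas ⊆ P.phiS ⁻¹' Iic 1 := by
    rw [hP.identifies]; exact fun x (hx : P.phiS x < 1) => hx.le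
  exact closure_minimal hsub (hP.lscId.isClosed_preimage 1) hcl

/-! ### The dual bound -/

lemma Assumptions.PhiT_xstar_le_one {P : Setup E m} (hP : Assumptions P) {τ : ℝ} (hτ : 0 < τ)
    (h1 : 1 ≤ τ * (P.f P.xstar).toReal) : P.PhiT τ P.xstar ≤ 1 := by
  refine max_le (iSup₂_le fun u hu => ?_) (ENNReal.ofReal_le_one.2 hP.phiS_xstar_le_one)
  rw [ENNReal.ofReal_le_one]
  by_contra hc
  rw [not_le] at hc
  have h2 : u * (τ * _) ≤ 1 := (hP.persp_le_one_iff hτ hu.1 _).1 hu.2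
  have he := interior_subset hP.e0_mem_interior
  have hE : 0 < (P.f P.e0).toReal := ENNReal.toReal_pos he.1 he.2
  have h3 := hP.persp (y := P.xstar) one_pos hc.le (by simpa using hP.xstar_mem)
  simp only [inv_one, one_smul, add_sub_cancel, one_mul] at h3
  have h4 : 0 < (u - 1) * (P.f P.e0).toReal := mul_pos (sub_pos.2 hc) hE
  nlinarith

/-- Corollary 1 of the paper: under (A1)-(A4), for `τ ≥ 1/p*` and `r ∈ [0,1]`,
any `y` with `Φ_τ(y) - d(τ) ≤ (1-r)(1 - d(τ))` has `y ∈ 𝒮` and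
`τ f(y) - 1 ≥ r ρ (1 - d(τ))`. -/
theorem statement7 (P : Setup E m) (hP : Assumptions P) (τ r : ℝ)
    (hτ : (P.pStar.toReal)⁻¹ ≤ τ) (hr0 : 0 ≤ r) (hr1 : r ≤ 1) (y : E)
    (hy : (P.PhiT τ y).toReal - (P.dVal τ).toReal ≤ (1 - r) * (1 - (P.dVal τ).toReal)) :
    y ∈ P.feas ∧
      ENNReal.ofReal (1 + r * P.rho * (1 - (P.dVal τ).toReal)) ≤
        ENNReal.ofReal τ * P.f y := by
  have hx := hP.xstar_mem
  set F := (P.f P.xstar).toReal with hF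
  have hFpos : 0 < F := ENNReal.toReal_pos hx.1 hx.2
  rw [← hP.xstarOpt, ← hF] at hτ
  have hτ0 : 0 < τ := (inv_pos.2 hFpos).trans_le hτ
  have hτF : 1 ≤ τ * F := by
    calc (1 : ℝ) = F⁻¹ * F := by field_simp
      _ ≤ _ := by gcongr
  have hd : P.dVal τ ≤ 1 := (iInf_le _ P.xstar).trans (hP.PhiT_xstar_le_one hτ0 hτF)
  have hd1 : (P.dVal τ).toReal ≤ 1 := ENNReal.toReal_le_of_le_ofReal zero_le_one (by simpa using hd)
  set d := (P.dVal τ).toReal with hdd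
  have hd0 : 0 ≤ d := ENNReal.toReal_nonneg
  set s := r * (1 - d) with hs
  have hs0 : 0 ≤ s := mul_nonneg hr0 (sub_nonneg.2 hd1)
  have hs1 : s ≤ 1 := by nlinarith
  -- Finiteness of `Φ_τ(y)` rules out the junk value `⊤.toReal = 0` in the hypothesis.
  have hfin : P.PhiT τ y ≠ ⊤ := max_ne_top (hP.radTrans_ne_top hτ0 y) ENNReal.ofReal_ne_top
  have hPhi : P.PhiT τ y ≤ ENNReal.ofReal (1 - s) := by
    rw [ENNReal.le_ofReal_iff_toReal_le hfin (by linarith)]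
    rw [hs]; linarith
  have hphi : P.phiS y ≤ 1 - s :=
    (ENNReal.ofReal_le_ofReal_iff (by linarith)).1 ((le_max_right _ _).trans hPhi)
  have hrad : radTrans (fun x => ENNReal.ofReal τ * P.f x) P.e0 y ≤ ENNReal.ofReal (1 - s) :=
    (le_max_left _ _).trans hPhi
  refine ⟨hP.mem_feas (by linarith), ?_⟩
  have key : ∀ v : ℝ, 1 - s < v →
      1 < v * (τ * (P.f (P.e0 + v⁻¹ • (y - P.e0))).toReal) := by
    intro v hv
    have hv0 : 0 < v := by linarith
    have h := one_lt_of_radTrans_lt hv0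
      (hrad.trans_lt ((ENNReal.ofReal_lt_ofReal_iff hv0).2 hv))
    by_contra hc
    exact absurd ((hP.persp_le_one_iff hτ0 hv0 _).2 (not_lt.1 hc)) (not_le.2 h)
  rw [← ENNReal.ofReal_toReal (hP.ne_top y), ← ENNReal.ofReal_mul hτ0.le]
  apply ENNReal.ofReal_le_ofReal
  have hgoal : r * P.rho * (1 - d) = s * P.rho := by rw [hs]; ring
  rw [hgoal]
  have he0 : P.rho ≤ τ * (P.f P.e0).toReal := by
    have hρ : 0 ≤ P.rho := div_nonneg hP.R0pos.le (add_nonneg Metric.diam_nonneg hP.R0pos.le)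
    have := hP.rho_mul_le_center
    calc P.rho ≤ P.rho * (τ * F) := le_mul_of_one_le_right hρ hτF
      _ = τ * (P.rho * F) := by ring
      _ ≤ _ := by gcongr
  rcases hs0.eq_or_lt with h0 | hspos
  · rw [← h0, zero_mul, add_zero]
    by_contra hc
    rw [not_le] at hc
    set c := (P.f y).toReal with hcdef
    -- A level strictly between `f y` and `1 / τ`.
    obtain ⟨q, hcq, hq⟩ := exists_between ((lt_div_iff₀' hτ0).2 hc)
    have hq0 : 0 < q := ENNReal.toReal_nonneg.trans_lt hcq
    have hev := hP.usc y (ENNReal.ofReal q)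
      ((ENNReal.lt_ofReal_iff_toReal_lt (hP.ne_top y)).2 hcq)
    have hlim : Tendsto (fun v : ℝ => P.e0 + v⁻¹ • (y - P.e0)) (𝓝[>] 1) (𝓝 y) := by
      have : ContinuousAt (fun v : ℝ => P.e0 + v⁻¹ • (y - P.e0)) 1 := by
        have : (1 : ℝ) ≠ 0 := one_ne_zero
        fun_prop (disch := assumption)
      have h := this.tendsto
      simp only [inv_one, one_smul, add_sub_cancel] at h
      exact h.mono_left nhdsWithin_le_nhds
    have hτq : τ * q < 1 := (lt_div_iff₀' hτ0).1 hq
    have hv1 : 1 < 1 / (τ * q) := (one_lt_div (by positivity)).2 hτq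
    obtain ⟨v, hvf, hv⟩ := ((hlim.eventually hev).and (Ioo_mem_nhdsGT hv1)).exists
    have hk := key v (by rw [← h0]; linarith [hv.1])
    have hvq := (ENNReal.lt_ofReal_iff_toReal_lt (hP.ne_top _)).1 hvf
    have hv0 : 0 < v := one_pos.trans hv.1
    have h5 : v * (τ * q) < 1 := (lt_div_iff₀ (by positivity)).1 hv.2
    have h6 : v * (τ * (P.f (P.e0 + v⁻¹ • (y - P.e0))).toReal) ≤ v * (τ * q) := by gcongr
    linarith
  · have hkey2 : ∀ v ∈ Ioo (1 - s) 1, 1 + (1 - v) * P.rho ≤ τ * (P.f y).toReal := by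
      intro v hv
      have hk := key v hv.1
      have hv0 : 0 < v := by linarith [hv.1]
      have hz : P.e0 + v⁻¹ • (y - P.e0) ∈ edom P.f := by
        refine ⟨fun h => ?_, hP.ne_top _⟩
        rw [h] at hk
        simp at hk
        linarith
      have h := hP.persp hv0 hv.2.le hz
      simp only [inv_one, one_smul, add_sub_cancel, one_mul] at h
      have h2 := mul_le_mul_of_nonneg_left h hτ0.le
      have h3 := mul_le_mul_of_nonneg_left he0 (sub_nonneg.2 hv.2.le)
      linarith
    have hlim : Tendsto (fun v : ℝ => 1 + (1 - v) * P.rho) (𝓝[>] (1 - s))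
        (𝓝 (1 + s * P.rho)) := by
      have : ContinuousAt (fun v : ℝ => 1 + (1 - v) * P.rho) (1 - s) := by fun_prop
      have h := this.tendsto
      simp only [sub_sub_cancel] at h
      exact h.mono_left nhdsWithin_le_nhds
    refine le_of_tendsto hlim ?_
    filter_upwards [Ioo_mem_nhdsGT (show 1 - s < 1 by linarith)] with v hv using hkey2 v hv

end MultiRadial
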